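/- Let ρ be a positive definite d×d density matrix and let (α,z) satisfy 0 < α < 1 and z ≥ max{α, 1−α}. Then the minimum of F_{α,z}(ρ, τ) over all d×d density matrices τ equals λ_min(ρ), the smallest eigenvalue of ρ. (Since every density matrix is the output of some quantum channel applied to any fixed σ, this is the minimum of F_{α,z}(ρ, Φ(σ)) over all quantum channels Φ.) -/

import Mathlib

open Matrix
open scoped ComplexOrder

/-- Real power of a (Hermitian) matrix via functional calculus on eigenvalues,
with `(0:ℝ) ^ t = 0` for `t ≠ 0`. Returns `0` on non-Hermitian input. -/
noncomputable def mpow {d : ℕ} (A : Matrix (Fin d) (Fin d) ℂ) (t : ℝ) :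
    Matrix (Fin d) (Fin d) ℂ :=
  if hA : A.IsHermitian then
    (hA.eigenvectorUnitary : Matrix (Fin d) (Fin d) ℂ) *
      Matrix.diagonal (fun i => ((hA.eigenvalues i ^ t : ℝ) : ℂ)) *
      (star (hA.eigenvectorUnitary : Matrix (Fin d) (Fin d) ℂ))
  else 0

/-- The quantum α-z-fidelity
`F_{α,z}(ρ,σ) = (Tr[(σ^{(1-α)/(2z)} ρ^{α/z} σ^{(1-α)/(2z)})^z])^{1/α}`. -/
noncomputable def Faz {d : ℕ} (ρ σ : Matrix (Fin d) (Fin d) ℂ) (α z : ℝ) : ℝ :=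
  ((mpow (mpow σ ((1 - α) / (2 * z)) * mpow ρ (α / z) * mpow σ ((1 - α) / (2 * z))) z).trace.re)
    ^ (1 / α)

/-- The classical α-fidelity `F_α^C(p,q) = (Σ_i p_i^α q_i^{1-α})^{1/α}`. -/
noncomputable def FazC {d : ℕ} (p q : Fin d → ℝ) (α : ℝ) : ℝ :=
  (∑ i, p i ^ α * q i ^ (1 - α)) ^ (1 / α)

/-- The vector `p` rearranged in increasing order. -/
noncomputable def sortUp {d : ℕ} (p : Fin d → ℝ) : Fin d → ℝ :=
  p ∘ Tuple.sort p

/-- The vector `p` rearranged in decreasing order. -/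
noncomputable def sortDown {d : ℕ} (p : Fin d → ℝ) : Fin d → ℝ :=
  fun i => sortUp p i.rev

/-- `λ↑(A)`: the eigenvalues of a Hermitian matrix in increasing order. -/
noncomputable def eigUp {d : ℕ} {A : Matrix (Fin d) (Fin d) ℂ} (hA : A.IsHermitian) :
    Fin d → ℝ := sortUp hA.eigenvalues

/-- `λ↓(A)`: the eigenvalues of a Hermitian matrix in decreasing order. -/
noncomputable def eigDown {d : ℕ} {A : Matrix (Fin d) (Fin d) ℂ} (hA : A.IsHermitian) :
    Fin d → ℝ := sortDown hA.eigenvalues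


/-- diagonal entries of `W diag(b) W*`. -/
lemma aux_diag_entry {d : ℕ} (W : Matrix (Fin d) (Fin d) ℂ) (b : Fin d → ℝ) (i : Fin d) :
    (W * Matrix.diagonal (fun j => (b j : ℂ)) * star W) i i
      = ((∑ j, ‖W i j‖ ^ 2 * b j : ℝ) : ℂ) := by
  rw [Matrix.mul_apply]
  push_cast
  refine Finset.sum_congr rfl fun j _ => ?_
  rw [Matrix.mul_diagonal, Matrix.star_apply, ← Complex.mul_conj']
  simp only [RCLike.star_def]
  ring

lemma aux_row {d : ℕ} (W : Matrix (Fin d) (Fin d) ℂ) (h : W * star W = 1) (i : Fin d) :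
    ∑ j, ‖W i j‖ ^ 2 = 1 := by
  have h1 := aux_diag_entry W (fun _ => 1) i
  simp only [Complex.ofReal_one, Matrix.diagonal_one, mul_one, h, Matrix.one_apply_eq] at h1
  exact_mod_cast h1.symm

lemma aux_col {d : ℕ} (W : Matrix (Fin d) (Fin d) ℂ) (h : star W * W = 1) (j : Fin d) :
    ∑ i, ‖W i j‖ ^ 2 = 1 := by
  have h1 := aux_row (star W) (by simpa using h) j
  simpa [Matrix.star_apply] using h1

/-- trace monotonicity of powers, in terms of spectral decompositions. -/
lemma aux_mono {d : ℕ} (U V : Matrix (Fin d) (Fin d) ℂ)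
    (hU : star U * U = 1) (hV : star V * V = 1) (a b : Fin d → ℝ)
    (ha : ∀ i, 0 ≤ a i) (hb : ∀ i, 0 ≤ b i)
    (h : (V * Matrix.diagonal (fun j => (b j : ℂ)) * star V
      - U * Matrix.diagonal (fun j => (a j : ℂ)) * star U).PosSemidef)
    (z : ℝ) (hz : 0 < z) : ∑ i, a i ^ z ≤ ∑ i, b i ^ z := by
  have hU' : U * star U = 1 := mul_eq_one_comm.mp hU
  have hV' : V * star V = 1 := mul_eq_one_comm.mp hV
  set W := star U * V with hW
  have hWs : star W = star V * U := by simp [hW]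
  have hW1 : W * star W = 1 := by
    rw [hWs, hW]
    calc star U * V * (star V * U) = star U * (V * star V) * U := by noncomm_ring
      _ = 1 := by rw [hV', mul_one, hU]
  have hW2 : star W * W = 1 := mul_eq_one_comm.mp hW1
  rcases le_total 1 z with h1 | h1
  · have key : ∀ i, a i ≤ ∑ j, ‖W i j‖ ^ 2 * b j := by
      intro i
      have h2 := (h.conjTranspose_mul_mul_same U).diag_nonneg (i := i)
      have e : Uᴴ * (V * Matrix.diagonal (fun j => (b j : ℂ)) * star V
          - U * Matrix.diagonal (fun j => (a j : ℂ)) * star U) * U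
          = W * Matrix.diagonal (fun j => (b j : ℂ)) * star W
            - Matrix.diagonal (fun j => (a j : ℂ)) := by
        rw [← Matrix.star_eq_conjTranspose, hWs, hW]
        calc _ = star U * V * Matrix.diagonal (fun j => (b j : ℂ)) * (star V * U)
            - (star U * U) * Matrix.diagonal (fun j => (a j : ℂ)) * (star U * U) := by noncomm_ring
          _ = _ := by rw [hU, one_mul, mul_one]
      rw [e, Matrix.sub_apply, aux_diag_entry, Matrix.diagonal_apply_eq, ← Complex.ofReal_sub] at h2
      have h3 := Complex.zero_le_real.mp h2
      linarith
    calc ∑ i, a i ^ z ≤ ∑ i, ∑ j, ‖W i j‖ ^ 2 * b j ^ z := by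
          refine Finset.sum_le_sum fun i _ => ?_
          refine (Real.rpow_le_rpow (ha i) (key i) hz.le).trans ?_
          have := (convexOn_rpow h1).map_sum_le (t := Finset.univ) (w := fun j => ‖W i j‖ ^ 2)
            (p := b) (fun j _ => by positivity) (aux_row W hW1 i) (fun j _ => hb j)
          simpa [smul_eq_mul] using this
      _ = ∑ j, b j ^ z := by
          rw [Finset.sum_comm]
          refine Finset.sum_congr rfl fun j _ => ?_
          rw [← Finset.sum_mul, aux_col W hW2, one_mul]
  · have key : ∀ j, ∑ i, ‖W i j‖ ^ 2 * a i ≤ b j := by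
      intro j
      have h2 := (h.conjTranspose_mul_mul_same V).diag_nonneg (i := j)
      have e : Vᴴ * (V * Matrix.diagonal (fun j => (b j : ℂ)) * star V
          - U * Matrix.diagonal (fun j => (a j : ℂ)) * star U) * V
          = Matrix.diagonal (fun j => (b j : ℂ))
            - star W * Matrix.diagonal (fun j => (a j : ℂ)) * star (star W) := by
        rw [← Matrix.star_eq_conjTranspose, star_star, hWs, hW]
        calc _ = (star V * V) * Matrix.diagonal (fun j => (b j : ℂ)) * (star V * V)
            - star V * U * Matrix.diagonal (fun j => (a j : ℂ)) * (star U * V) := by noncomm_ring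
          _ = _ := by rw [hV, one_mul, mul_one]
      rw [e, Matrix.sub_apply, aux_diag_entry, Matrix.diagonal_apply_eq, ← Complex.ofReal_sub] at h2
      have h3 := Complex.zero_le_real.mp h2
      simp only [Matrix.star_apply, norm_star] at h3
      linarith
    calc ∑ i, a i ^ z = ∑ j, ∑ i, ‖W i j‖ ^ 2 * a i ^ z := by
          rw [Finset.sum_comm]
          refine Finset.sum_congr rfl fun i _ => ?_
          rw [← Finset.sum_mul, aux_row W hW1, one_mul]
      _ ≤ ∑ j, b j ^ z := by
          refine Finset.sum_le_sum fun j _ => ?_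
          refine le_trans ?_ (Real.rpow_le_rpow
            (Finset.sum_nonneg fun i _ => mul_nonneg (by positivity) (ha i)) (key j) hz.le)
          have := (Real.concaveOn_rpow hz.le h1).le_map_sum (t := Finset.univ)
            (w := fun i => ‖W i j‖ ^ 2)
            (p := a) (fun j _ => by positivity) (aux_col W hW2 j) (fun j _ => ha j)
          simpa [smul_eq_mul] using this

lemma aux_spec {d : ℕ} {A : Matrix (Fin d) (Fin d) ℂ} (hA : A.IsHermitian) :
    (hA.eigenvectorUnitary : Matrix (Fin d) (Fin d) ℂ) *
      Matrix.diagonal (fun i => (hA.eigenvalues i : ℂ)) *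
      (star (hA.eigenvectorUnitary : Matrix (Fin d) (Fin d) ℂ)) = A := by
  conv_rhs => rw [hA.spectral_theorem]
  rfl

lemma aux_unit {d : ℕ} {A : Matrix (Fin d) (Fin d) ℂ} (hA : A.IsHermitian) :
    star (hA.eigenvectorUnitary : Matrix (Fin d) (Fin d) ℂ) *
      (hA.eigenvectorUnitary : Matrix (Fin d) (Fin d) ℂ) = 1 :=
  Unitary.coe_star_mul_self _

lemma aux_trace {d : ℕ} (U : Matrix (Fin d) (Fin d) ℂ) (hU : star U * U = 1) (a : Fin d → ℝ) :
    (U * Matrix.diagonal (fun j => (a j : ℂ)) * star U).trace = ((∑ i, a i : ℝ) : ℂ) := by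
  rw [Matrix.trace_mul_cycle, hU, one_mul, Matrix.trace_diagonal]
  push_cast
  rfl

lemma aux_trace_mpow {d : ℕ} {A : Matrix (Fin d) (Fin d) ℂ} (hA : A.IsHermitian) (t : ℝ) :
    (mpow A t).trace.re = ∑ i, hA.eigenvalues i ^ t := by
  rw [mpow, dif_pos hA, aux_trace _ (aux_unit hA), Complex.ofReal_re]

lemma aux_psd {d : ℕ} (U : Matrix (Fin d) (Fin d) ℂ) (a : Fin d → ℝ) (ha : ∀ i, 0 ≤ a i) :
    (U * Matrix.diagonal (fun j => (a j : ℂ)) * star U).PosSemidef := by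
  have : (Matrix.diagonal (fun j => (a j : ℂ))).PosSemidef :=
    Matrix.PosSemidef.diagonal fun i => by simpa using ha i
  exact this.mul_mul_conjTranspose_same U

lemma aux_mpow_psd {d : ℕ} {A : Matrix (Fin d) (Fin d) ℂ} (hA : A.PosSemidef) (t : ℝ) :
    (mpow A t).PosSemidef := by
  rw [mpow, dif_pos hA.1]
  exact aux_psd _ _ fun i => Real.rpow_nonneg (hA.eigenvalues_nonneg i) _

lemma aux_mpow_idem {d : ℕ} {A : Matrix (Fin d) (Fin d) ℂ} (hA : A.IsHermitian)
    (h : A * A = A) (t : ℝ) (ht : t ≠ 0) : mpow A t = A := by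
  have hs := aux_spec hA
  have hu := aux_unit hA
  rw [mpow, dif_pos hA]
  conv_rhs => rw [← hs]
  set U : Matrix (Fin d) (Fin d) ℂ := hA.eigenvectorUnitary.1
  have hD : Matrix.diagonal (fun i => (hA.eigenvalues i : ℂ)) = star U * A * U := by
    conv_rhs => rw [← hs]
    calc _ = (star U * U) * Matrix.diagonal (fun i => (hA.eigenvalues i : ℂ)) * (star U * U) := by
            rw [hu, one_mul, mul_one]
      _ = _ := by noncomm_ring
  have hu' : U * star U = 1 := mul_eq_one_comm.mp hu
  have hDD : Matrix.diagonal (fun i => (hA.eigenvalues i : ℂ)) *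
      Matrix.diagonal (fun i => (hA.eigenvalues i : ℂ)) =
      Matrix.diagonal (fun i => (hA.eigenvalues i : ℂ)) := by
    rw [hD]
    calc _ = star U * (A * (U * star U) * A) * U := by noncomm_ring
      _ = _ := by rw [hu', mul_one, h]
  congr 3
  funext i
  have h2 := congrFun (congrFun hDD i) i
  rw [Matrix.diagonal_mul_diagonal, Matrix.diagonal_apply_eq, Matrix.diagonal_apply_eq] at h2
  have h3 : hA.eigenvalues i * hA.eigenvalues i = hA.eigenvalues i := by exact_mod_cast h2
  have h4 : hA.eigenvalues i = 0 ∨ hA.eigenvalues i = 1 := by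
    rcases eq_or_ne (hA.eigenvalues i) 0 with h0 | h0
    · exact Or.inl h0
    · exact Or.inr (mul_left_cancel₀ h0 (by rw [h3, mul_one]))
  rcases h4 with h4 | h4 <;> rw [h4] <;> simp [ht]

/-- for a positive definite density matrix `ρ`, `0 < α < 1` and
`z ≥ max{α, 1−α}`, the minimum of `F_{α,z}(ρ, τ)` over all density matrices `τ`
equals the smallest eigenvalue of `ρ`. -/
theorem stmt_13 {d : ℕ} (hd : 0 < d) (ρ : Matrix (Fin d) (Fin d) ℂ)
    (hρ : ρ.PosDef) (hρ1 : ρ.trace = 1)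
    (α z : ℝ) (hα : α ∈ Set.Ioo (0 : ℝ) 1) (hz : max α (1 - α) ≤ z) :
    IsLeast {x : ℝ | ∃ τ : Matrix (Fin d) (Fin d) ℂ,
        τ.PosSemidef ∧ τ.trace = 1 ∧ x = Faz ρ τ α z}
      (eigUp hρ.1 ⟨0, hd⟩) := by
  obtain ⟨hα0, hα1⟩ := hα
  have hz0 : 0 < z := lt_of_lt_of_le hα0 ((le_max_left _ _).trans hz)
  have hmin : ∀ i, eigUp hρ.1 ⟨0, hd⟩ ≤ hρ.1.eigenvalues i := by
    intro i
    have h1 := Tuple.monotone_sort hρ.1.eigenvalues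
      (show (⟨0, hd⟩ : Fin d) ≤ (Tuple.sort hρ.1.eigenvalues).symm i from Nat.zero_le _)
    simpa [eigUp, sortUp] using h1
  set k := Tuple.sort hρ.1.eigenvalues ⟨0, hd⟩ with hk
  have hlam : eigUp hρ.1 ⟨0, hd⟩ = hρ.1.eigenvalues k := rfl
  have hpos : 0 < eigUp hρ.1 ⟨0, hd⟩ := by rw [hlam]; exact hρ.eigenvalues_pos k
  set lam := eigUp hρ.1 ⟨0, hd⟩ with hlam'
  have ht : (1 - α) / (2 * z) ≠ 0 := by
    have : 0 < 1 - α := by linarith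
    positivity
  have hroot : (lam ^ α) ^ (1 / α) = lam := by
    rw [← Real.rpow_mul hpos.le, mul_one_div_cancel hα0.ne', Real.rpow_one]
  have hcz : (lam ^ (α / z)) ^ z = lam ^ α := by
    rw [← Real.rpow_mul hpos.le, div_mul_cancel₀ _ hz0.ne']
  constructor
  · have hu := aux_unit hρ.1
    set U : Matrix (Fin d) (Fin d) ℂ := hρ.1.eigenvectorUnitary.1 with hUdef
    set e : Fin d → ℝ := fun i => if i = k then 1 else 0 with he
    have hsum : ∑ i, e i = 1 := by simp [he]
    set τ := U * Matrix.diagonal (fun j => (e j : ℂ)) * star U with hτ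
    have hτp : τ.PosSemidef := aux_psd _ _ fun i => by simp only [he]; split_ifs <;> norm_num
    have hsand : ∀ D : Fin d → ℝ, τ * (U * Matrix.diagonal (fun j => (D j : ℂ)) * star U) * τ
        = U * Matrix.diagonal (fun j => ((e j * D j : ℝ) : ℂ)) * star U := by
      intro D
      calc _ = U * (Matrix.diagonal (fun j => (e j : ℂ)) * (star U * U) *
            Matrix.diagonal (fun j => (D j : ℂ)) * (star U * U) *
            Matrix.diagonal (fun j => (e j : ℂ))) * star U := by rw [hτ]; noncomm_ring
        _ = _ := by
            rw [hu, mul_one, mul_one, Matrix.diagonal_mul_diagonal, Matrix.diagonal_mul_diagonal]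
            congr 3
            funext j
            by_cases hj : j = k <;> simp [he, hj]
    have hidem : τ * τ = τ := by
      have := hsand (fun _ => 1)
      simp only [Complex.ofReal_one, Matrix.diagonal_one, mul_one,
        mul_eq_one_comm.mp hu] at this
      exact this
    refine ⟨τ, hτp, by rw [hτ, aux_trace U hu, hsum, Complex.ofReal_one], ?_⟩
    rw [Faz, aux_mpow_idem hτp.1 hidem _ ht]
    have hM : τ * mpow ρ (α / z) * τ = U * Matrix.diagonal
        (fun j => ((e j * hρ.1.eigenvalues j ^ (α / z) : ℝ) : ℂ)) * star U := by
      rw [mpow, dif_pos hρ.1]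
      exact hsand _
    have hb0 : ∀ j, 0 ≤ e j * hρ.1.eigenvalues j ^ (α / z) := fun j =>
      mul_nonneg (by simp only [he]; split_ifs <;> norm_num)
        (Real.rpow_nonneg (hρ.eigenvalues_pos j).le _)
    have hMp : (τ * mpow ρ (α / z) * τ).PosSemidef := by
      rw [hM]; exact aux_psd _ _ hb0
    rw [aux_trace_mpow hMp.1]
    have hs := (aux_spec hMp.1).trans hM
    have heq : ∑ i, hMp.1.eigenvalues i ^ z
        = ∑ i, (e i * hρ.1.eigenvalues i ^ (α / z)) ^ z := by
      apply le_antisymm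
      · refine aux_mono _ U (aux_unit hMp.1) hu _ _ hMp.eigenvalues_nonneg hb0 ?_ z hz0
        rw [hs, sub_self]; exact Matrix.PosSemidef.zero
      · refine aux_mono U _ hu (aux_unit hMp.1) _ _ hb0 hMp.eigenvalues_nonneg ?_ z hz0
        rw [hs, sub_self]; exact Matrix.PosSemidef.zero
    rw [heq, Finset.sum_eq_single k]
    · simp only [he, if_true, one_mul]
      rw [← hlam, hcz, hroot]
    · intro j _ hj
      simp [he, hj, hz0.ne']
    · simp
  · rintro x ⟨τ, hτ, hτ1, rfl⟩
    rw [Faz]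
    set S := mpow τ ((1 - α) / (2 * z)) with hS
    have hSp : S.PosSemidef := aux_mpow_psd hτ _
    have hRp : (mpow ρ (α / z)).PosSemidef := aux_mpow_psd hρ.posSemidef _
    have hMp : (S * mpow ρ (α / z) * S).PosSemidef := by
      have := hRp.mul_mul_conjTranspose_same S
      rwa [hSp.1.eq] at this
    rw [aux_trace_mpow hMp.1]
    have hu := aux_unit hτ.1
    have hq0 := hτ.eigenvalues_nonneg
    set c := lam ^ (α / z) with hc
    have hc0 : 0 ≤ c := Real.rpow_nonneg hpos.le _
    have hRc : (mpow ρ (α / z) - (c : ℂ) • 1).PosSemidef := by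
      have h1 := aux_psd (hρ.1.eigenvectorUnitary : Matrix (Fin d) (Fin d) ℂ)
        (fun i => hρ.1.eigenvalues i ^ (α / z) - c) (fun i => by
          have := Real.rpow_le_rpow hpos.le (hmin i) (show 0 ≤ α / z by positivity)
          linarith)
      convert h1 using 1
      rw [mpow, dif_pos hρ.1]
      have hu1 := mul_eq_one_comm.mp (aux_unit hρ.1)
      have : Matrix.diagonal (fun j => ((hρ.1.eigenvalues j ^ (α / z) - c : ℝ) : ℂ))
          = Matrix.diagonal (fun j => ((hρ.1.eigenvalues j ^ (α / z) : ℝ) : ℂ))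
            - (c : ℂ) • (1 : Matrix (Fin d) (Fin d) ℂ) := by
        ext i j
        by_cases hij : i = j
        · subst hij; simp
        · simp [hij]
      rw [this, mul_sub, sub_mul, mul_smul_comm, mul_one, smul_mul_assoc, hu1]
    have hSS : S * S = (hτ.1.eigenvectorUnitary : Matrix (Fin d) (Fin d) ℂ) * Matrix.diagonal
        (fun j => (((hτ.1.eigenvalues j ^ ((1 - α) / (2 * z))) ^ 2 : ℝ) : ℂ)) *
        star (hτ.1.eigenvectorUnitary : Matrix (Fin d) (Fin d) ℂ) := by
      rw [hS, mpow, dif_pos hτ.1]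
      set U : Matrix (Fin d) (Fin d) ℂ := hτ.1.eigenvectorUnitary.1
      set D := Matrix.diagonal
        (fun j => ((hτ.1.eigenvalues j ^ ((1 - α) / (2 * z)) : ℝ) : ℂ)) with hD
      calc _ = U * (D * (star U * U) * D) * star U := by noncomm_ring
        _ = _ := by
          rw [hu, mul_one, hD, Matrix.diagonal_mul_diagonal]
          congr 3
          funext j
          push_cast
          ring
    have key := aux_mono (hτ.1.eigenvectorUnitary : Matrix (Fin d) (Fin d) ℂ) _ hu
      (aux_unit hMp.1) (fun i => c * (hτ.1.eigenvalues i ^ ((1 - α) / (2 * z))) ^ 2)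
      hMp.1.eigenvalues (fun i => by positivity) hMp.eigenvalues_nonneg (by
        rw [aux_spec hMp.1]
        have h1 := hRc.mul_mul_conjTranspose_same S
        rw [hSp.1.eq] at h1
        convert h1 using 1
        rw [mul_sub, sub_mul, mul_smul_comm, mul_one, smul_mul_assoc, hSS]
        congr 1
        rw [← smul_mul_assoc, ← mul_smul_comm]
        congr 2
        ext i j
        by_cases hij : i = j
        · subst hij; simp
        · simp [hij]) z hz0
    have hqs : ∑ i, hτ.1.eigenvalues i = 1 := by
      have h1 := aux_trace _ hu hτ.1.eigenvalues
      rw [aux_spec hτ.1, hτ1] at h1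
      exact_mod_cast h1.symm
    have hlow : lam ^ α ≤ ∑ i, (c * (hτ.1.eigenvalues i ^ ((1 - α) / (2 * z))) ^ 2) ^ z := by
      calc lam ^ α = ∑ i, lam ^ α * hτ.1.eigenvalues i := by
            rw [← Finset.mul_sum, hqs, mul_one]
        _ ≤ _ := by
          refine Finset.sum_le_sum fun i _ => ?_
          rw [Real.mul_rpow hc0 (sq_nonneg _), hcz]
          refine mul_le_mul_of_nonneg_left ?_ (Real.rpow_nonneg hpos.le _)
          rw [← Real.rpow_natCast, ← Real.rpow_mul (hq0 i), ← Real.rpow_mul (hq0 i)]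
          have : (1 - α) / (2 * z) * ((2 : ℕ) : ℝ) * z = 1 - α := by
            push_cast
            field_simp
          rw [this]
          have hle : hτ.1.eigenvalues i ≤ 1 := by
            rw [← hqs]
            exact Finset.single_le_sum (fun j _ => hq0 j) (Finset.mem_univ i)
          rcases (hq0 i).eq_or_lt with h0 | h0
          · simp only [← h0]; exact Real.rpow_nonneg le_rfl _
          · calc hτ.1.eigenvalues i = hτ.1.eigenvalues i ^ (1:ℝ) := (Real.rpow_one _).symm
              _ ≤ _ := Real.rpow_le_rpow_of_exponent_ge h0 hle (by linarith)
    calc lam = (lam ^ α) ^ (1 / α) := hroot.symm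
      _ ≤ _ := Real.rpow_le_rpow (Real.rpow_nonneg hpos.le _) (hlow.trans key) (by positivity)
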